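/- arXiv:2106.05761 — 8 statements merged into one kernel-verified Lean document; each statement's English description precedes it below -/
import Mathlib

section
/- Let U and R be finite sets with |R| = k ≥ 2, let C be a finite set of weighted constraints on U × R each of one of the six standard forms (SoD_U, BoD_U, SoD_E, BoD_E, Card_UB, Card_LB), and let τ ≥ 1 be an integer such that τ ≥ t_c for every Card_LB constraint in C. Then for every complete authorization relation A ⊆ U × R there exists a complete authorization relation A* ⊆ A such that at most 3τ·(k choose 2) users are authorized by A* for at least one resource (i.e., |{u ∈ U : A*(u) ≠ ∅}| ≤ 3τ·(k choose 2)) and w_C(A*) ≤ w_C(A). -/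
open Finset

namespace APEP

variable {U R : Type*} [Fintype U] [Fintype R] [DecidableEq U] [DecidableEq R]

/-- The set of users authorized for resource `r` by `A`. -/
def ares (A : Finset (U × R)) (r : R) : Finset U := univ.filter (fun u => (u, r) ∈ A)

/-- The set of resources for which user `u` is authorized by `A`. -/
def ausr (A : Finset (U × R)) (u : U) : Finset R := univ.filter (fun r => (u, r) ∈ A)

/-- An authorization relation is complete if every resource has an authorized user. -/
def Complete (A : Finset (U × R)) : Prop := ∀ r : R, (ares A r).Nonempty

/-- `f : ℤ → ℕ` is monotonically increasing with `f z = 0` iff `z ≤ 0`. -/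
def MonoIncZero (f : ℤ → ℕ) : Prop := Monotone f ∧ ∀ z : ℤ, f z = 0 ↔ z ≤ 0

def IsSoDU (w : Finset (U × R) → ℕ) : Prop :=
  ∃ (r r' : R) (f : ℤ → ℕ), MonoIncZero f ∧
    ∀ A, w A = f (((ares A r) ∩ (ares A r')).card)

def IsBoDU (w : Finset (U × R) → ℕ) : Prop :=
  ∃ (r r' : R) (f : ℤ → ℕ), MonoIncZero f ∧
    ∀ A, w A = f (max ((ares A r \ ares A r').card) ((ares A r' \ ares A r).card))

def IsSoDE (w : Finset (U × R) → ℕ) : Prop :=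
  ∃ (r r' : R) (ℓ : ℕ), 0 < ℓ ∧
    ∀ A, w A = if ares A r ≠ ares A r' then 0 else ℓ

def IsBoDE (w : Finset (U × R) → ℕ) : Prop :=
  ∃ (r r' : R) (ℓ : ℕ), 0 < ℓ ∧
    ∀ A, w A = if ((ares A r) ∩ (ares A r')).Nonempty then 0 else ℓ

def IsCardUB (w : Finset (U × R) → ℕ) : Prop :=
  ∃ (r : R) (t : ℕ) (f : ℤ → ℕ), MonoIncZero f ∧
    ∀ A, w A = f (((ares A r).card : ℤ) - (t : ℤ))

/-- A Card_LB constraint with lower-bound parameter `t`. -/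
def IsCardLB (w : Finset (U × R) → ℕ) (t : ℕ) : Prop :=
  ∃ (r : R) (f : ℤ → ℕ), MonoIncZero f ∧
    ∀ A, w A = f ((t : ℤ) - ((ares A r).card : ℤ))

/-!
For two distinct resources `r`, `r'`, the users authorized for at least one of them split into three
cells: those authorized for both, only for `r`, and only for `r'`. Keep up to `τ` users from each
cell, over all pairs: at most `3 * τ * (k choose 2)` users. Restricting `A` to the kept users
never increases a violation that is monotone in the relation (SoD_U, Card_UB) or computed user by
user (BoD_U). The set `A(r)` is a union of two cells, so it is either kept entirely or retains `τ`
users, which settles completeness and Card_LB; and no nonempty cell is lost, which settles SoD_E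
and BoD_E.
-/

section Saturates

variable {α : Type*} [DecidableEq α]

/-- `V` contains all of `S`, or at least `n` of its elements: passing from `S` to `S ∩ V` is
invisible to cardinality thresholds up to `n`. -/
def Saturates (n : ℕ) (S V : Finset α) : Prop := S ⊆ V ∨ n ≤ #(S ∩ V)

variable {m n : ℕ} {S T V : Finset α}

theorem Saturates.anti (h : Saturates n S V) (hmn : m ≤ n) : Saturates m S V :=
  h.imp_right hmn.trans

theorem Saturates.union (hS : Saturates n S V) (hT : Saturates n T V) :
    Saturates n (S ∪ T) V := by
  rcases hS with hS | hS
  · rcases hT with hT | hT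
    · exact .inl (union_subset hS hT)
    · exact .inr (hT.trans (card_le_card (inter_subset_inter_right subset_union_right)))
  · exact .inr (hS.trans (card_le_card (inter_subset_inter_right subset_union_left)))

theorem Saturates.inter_nonempty (h : Saturates 1 S V) (hS : S.Nonempty) :
    (S ∩ V).Nonempty := by
  rcases h with h | h
  · rwa [inter_eq_left.2 h]
  · exact card_pos.1 h

theorem exists_card_le_forall_saturates {ι : Type*} (I : Finset ι) (S : ι → Finset α) (n : ℕ) :
    ∃ V, #V ≤ #I * n ∧ ∀ i ∈ I, Saturates n (S i) V := by
  choose T hTS hT using fun i => exists_subset_card_eq (min_le_right n #(S i))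
  refine ⟨I.biUnion T, card_biUnion_le_card_mul _ _ _ fun i _ => (hT i).trans_le (min_le_left ..),
    fun i hi => ?_⟩
  have hTV : T i ⊆ I.biUnion T := subset_biUnion_of_mem T hi
  rcases le_total n #(S i) with h | h
  · have hT_card : #(T i) = n := (hT i).trans (min_eq_left h)
    exact .inr (hT_card.ge.trans (card_le_card (subset_inter (hTS i) hTV)))
  · have hT_card : #(T i) = #(S i) := (hT i).trans (min_eq_right h)
    have hTS_eq : T i = S i := eq_of_subset_of_card_le (hTS i) hT_card.ge
    exact .inl (hTS_eq ▸ hTV)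

end Saturates

section Restriction

variable {A B : Finset (U × R)} {u : U} {r : R}

omit [Fintype U] in
theorem mem_ausr : r ∈ ausr A u ↔ (u, r) ∈ A := by simp [ausr]

/-- The authorizations that `A` grants to the users in `V`. -/
def restrictUsers (A : Finset (U × R)) (V : Finset U) : Finset (U × R) := A.filter (·.1 ∈ V)

theorem filter_ausr_restrictUsers_nonempty_subset (A : Finset (U × R)) (V : Finset U) :
    univ.filter (fun u => (ausr (restrictUsers A V) u).Nonempty) ⊆ V := by
  intro u hu
  obtain ⟨r, hr⟩ := (mem_filter.1 hu).2
  exact (mem_filter.1 (mem_ausr.1 hr)).2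

omit [Fintype R]

theorem mem_ares : u ∈ ares A r ↔ (u, r) ∈ A := by simp [ares]

theorem ares_mono (h : A ⊆ B) (r : R) : ares A r ⊆ ares B r :=
  fun _ hu => mem_ares.2 (h (mem_ares.1 hu))

omit [Fintype U] [DecidableEq R] in
theorem restrictUsers_subset (A : Finset (U × R)) (V : Finset U) : restrictUsers A V ⊆ A :=
  filter_subset _ _

theorem ares_restrictUsers (A : Finset (U × R)) (V : Finset U) (r : R) :
    ares (restrictUsers A V) r = ares A r ∩ V := by
  ext u
  simp [mem_ares, restrictUsers]

theorem ares_restrictUsers_inter (A : Finset (U × R)) (V : Finset U) (r r' : R) :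
    ares (restrictUsers A V) r ∩ ares (restrictUsers A V) r' = (ares A r ∩ ares A r') ∩ V := by
  rw [ares_restrictUsers, ares_restrictUsers, ← inter_inter_distrib_right]

theorem ares_restrictUsers_sdiff (A : Finset (U × R)) (V : Finset U) (r r' : R) :
    ares (restrictUsers A V) r \ ares (restrictUsers A V) r' = (ares A r \ ares A r') ∩ V := by
  rw [ares_restrictUsers, ares_restrictUsers]
  exact (inf_sdiff_distrib_right _ _ _).symm

theorem ares_eq_of_ares_restrictUsers_eq {V : Finset U} {r r' : R}
    (hV : ∀ a b, Saturates 1 (ares A a \ ares A b) V)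
    (h : ares (restrictUsers A V) r = ares (restrictUsers A V) r') : ares A r = ares A r' := by
  have subset_of_eq {a b : R} (hab : ares (restrictUsers A V) a = ares (restrictUsers A V) b) :
      ares A a ⊆ ares A b := by
    contrapose! hab
    have hne := (hV a b).inter_nonempty (sdiff_nonempty.2 hab)
    rw [← ares_restrictUsers_sdiff, sdiff_nonempty] at hne
    exact fun hab => hne hab.subset
  exact (subset_of_eq h).antisymm (subset_of_eq h.symm)

theorem Complete.restrictUsers {V : Finset U} (hA : Complete A)
    (hV : ∀ r, Saturates 1 (ares A r) V) : Complete (restrictUsers A V) := by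
  intro r
  rw [ares_restrictUsers]
  exact (hV r).inter_nonempty (hA r)

end Restriction

section Weights

omit [Fintype R]

variable {w : Finset (U × R) → ℕ} {A : Finset (U × R)} {V : Finset U}

theorem IsSoDU.monotone (hw : IsSoDU w) : Monotone w := by
  obtain ⟨r, r', f, hf, hw⟩ := hw
  intro A B hAB
  rw [hw, hw]
  exact hf.1 (mod_cast card_le_card (inter_subset_inter (ares_mono hAB r) (ares_mono hAB r')))

theorem IsCardUB.monotone (hw : IsCardUB w) : Monotone w := by
  obtain ⟨r, t, f, hf, hw⟩ := hw
  intro A B hAB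
  rw [hw, hw]
  exact hf.1 (sub_le_sub_right (mod_cast card_le_card (ares_mono hAB r)) _)

theorem IsBoDU.restrictUsers_le (hw : IsBoDU w) (A : Finset (U × R)) (V : Finset U) :
    w (restrictUsers A V) ≤ w A := by
  obtain ⟨r, r', f, hf, hw⟩ := hw
  rw [hw, hw, ares_restrictUsers_sdiff, ares_restrictUsers_sdiff]
  exact hf.1 (mod_cast max_le_max (card_le_card inter_subset_left) (card_le_card inter_subset_left))

theorem IsSoDE.restrictUsers_le (hw : IsSoDE w)
    (hV : ∀ r r', Saturates 1 (ares A r \ ares A r') V) : w (restrictUsers A V) ≤ w A := by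
  obtain ⟨r, r', ℓ, -, hw⟩ := hw
  rw [hw, hw]
  by_cases h : ares (restrictUsers A V) r = ares (restrictUsers A V) r'
  · simp [h, ares_eq_of_ares_restrictUsers_eq hV h]
  · simp [h]

theorem IsBoDE.restrictUsers_le (hw : IsBoDE w)
    (hV : ∀ r r', Saturates 1 (ares A r ∩ ares A r') V) : w (restrictUsers A V) ≤ w A := by
  obtain ⟨r, r', ℓ, -, hw⟩ := hw
  rw [hw, hw, ares_restrictUsers_inter]
  by_cases h : (ares A r ∩ ares A r').Nonempty
  · rw [if_pos ((hV r r').inter_nonempty h)]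
    exact Nat.zero_le _
  · rw [if_neg h, if_neg (mt (Nonempty.mono inter_subset_left) h)]

theorem IsCardLB.restrictUsers_le {t : ℕ} (hw : IsCardLB w t)
    (hV : ∀ r, Saturates t (ares A r) V) : w (restrictUsers A V) ≤ w A := by
  obtain ⟨r, f, hf, hw⟩ := hw
  rw [hw, hw, ares_restrictUsers]
  rcases hV r with h | h
  · rw [inter_eq_left.2 h]
  · have f_eq_zero : f (t - #(ares A r ∩ V)) = 0 := (hf.2 _).2 (by lia)
    exact f_eq_zero.trans_le (Nat.zero_le _)

end Weights

/-- `V` saturates, at level `τ`, the three cells of every pair of distinct resources; as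
`(r, r')` is ordered, two cells suffice: the third comes from the swapped pair. -/
def IsPairSample (τ : ℕ) (A : Finset (U × R)) (V : Finset U) : Prop :=
  ∀ ⦃r r' : R⦄, r ≠ r' →
    Saturates τ (ares A r ∩ ares A r') V ∧ Saturates τ (ares A r \ ares A r') V

namespace IsPairSample

variable {τ : ℕ} {A : Finset (U × R)} {V : Finset U}

omit [Fintype R]

theorem saturates_sdiff (hV : IsPairSample τ A V) (r r' : R) :
    Saturates τ (ares A r \ ares A r') V := by
  obtain rfl | h := eq_or_ne r r'
  · exact .inl (by simp)
  · exact (hV h).2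

variable [Nontrivial R]

theorem saturates_ares (hV : IsPairSample τ A V) (r : R) : Saturates τ (ares A r) V := by
  obtain ⟨r', h⟩ := exists_ne r
  rw [← sdiff_union_inter (ares A r) (ares A r')]
  exact (hV h.symm).2.union (hV h.symm).1

theorem saturates_inter (hV : IsPairSample τ A V) (r r' : R) :
    Saturates τ (ares A r ∩ ares A r') V := by
  obtain rfl | h := eq_or_ne r r'
  · simpa using hV.saturates_ares r
  · exact (hV h).1

end IsPairSample

/-- The users whose authorizations under `A`, among the resources in `P`, are exactly those
in `X`. For `P = {r, r'}`, the three nonempty `X ⊆ P` give the cells of the pair. -/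
def cell (A : Finset (U × R)) (P X : Finset R) : Finset U := univ.filter fun u => ausr A u ∩ P = X

theorem cell_pair_self (A : Finset (U × R)) (r r' : R) :
    cell A {r, r'} {r, r'} = ares A r ∩ ares A r' := by
  ext u
  simp [cell, insert_subset_iff, mem_ausr, mem_ares]

theorem cell_pair_left (A : Finset (U × R)) {r r' : R} (h : r ≠ r') :
    cell A {r, r'} {r} = ares A r \ ares A r' := by
  ext u
  simp only [cell, mem_filter, mem_univ, true_and, Finset.ext_iff, mem_inter, mem_insert,
    mem_singleton, mem_sdiff, mem_ares, mem_ausr]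
  grind

theorem exists_isPairSample (τ : ℕ) (A : Finset (U × R)) :
    ∃ V, #V ≤ 3 * τ * (Fintype.card R).choose 2 ∧ IsPairSample τ A V := by
  let cells := (powersetCard 2 (univ : Finset R)).sigma fun P => P.powerset.erase ∅
  have card_cells : #cells = (Fintype.card R).choose 2 * 3 := by
    rw [card_sigma, sum_const_nat, card_powersetCard, card_univ]
    intro P hP
    rw [card_erase_of_mem (empty_mem_powerset P), card_powerset, (mem_powersetCard.1 hP).2]
    rfl
  obtain ⟨V, hV_card, hV⟩ := exists_card_le_forall_saturates cells (fun c => cell A c.1 c.2) τ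
  refine ⟨V, hV_card.trans_eq (by rw [card_cells]; ring), fun r r' h => ⟨?_, ?_⟩⟩
  · rw [← cell_pair_self]
    exact hV ⟨{r, r'}, {r, r'}⟩ (by simp [cells, card_pair h])
  · rw [← cell_pair_left A h]
    exact hV ⟨{r, r'}, {r}⟩ (by simp [cells, card_pair h])

/-- `w` is a weighted constraint of one of the six standard forms, where `τ` bounds the threshold
of a Card_LB constraint. -/
def IsStandardConstraint (τ : ℕ) (w : Finset (U × R) → ℕ) : Prop :=
  IsSoDU w ∨ IsBoDU w ∨ IsSoDE w ∨ IsBoDE w ∨ IsCardUB w ∨ ∃ t ≤ τ, IsCardLB w t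

omit [Fintype R] in
theorem IsStandardConstraint.restrictUsers_le [Nontrivial R] {τ : ℕ} {w : Finset (U × R) → ℕ}
    {A : Finset (U × R)} {V : Finset U} (hw : IsStandardConstraint τ w) (hτ : 1 ≤ τ)
    (hV : IsPairSample τ A V) : w (restrictUsers A V) ≤ w A := by
  rcases hw with hw | hw | hw | hw | hw | ⟨t, ht, hw⟩
  · exact hw.monotone (restrictUsers_subset A V)
  · exact hw.restrictUsers_le A V
  · exact hw.restrictUsers_le fun r r' => (hV.saturates_sdiff r r').anti hτ
  · exact hw.restrictUsers_le fun r r' => (hV.saturates_inter r r').anti hτ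
  · exact hw.monotone (restrictUsers_subset A V)
  · exact hw.restrictUsers_le fun r => (hV.saturates_ares r).anti ht

theorem small_witness_bound_general [Nontrivial R] {τ : ℕ} (hτ : 1 ≤ τ) {A : Finset (U × R)}
    (hA : Complete A) :
    ∃ Astar ⊆ A, Complete Astar ∧
      #(univ.filter fun u => (ausr Astar u).Nonempty) ≤ 3 * τ * (Fintype.card R).choose 2 ∧
      ∀ w, IsStandardConstraint τ w → w Astar ≤ w A := by
  obtain ⟨V, hV_card, hV⟩ := exists_isPairSample τ A
  exact ⟨restrictUsers A V, restrictUsers_subset A V,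
    hA.restrictUsers fun r => (hV.saturates_ares r).anti hτ,
    (card_le_card (filter_ausr_restrictUsers_nonempty_subset A V)).trans hV_card,
    fun _ hw => hw.restrictUsers_le hτ hV⟩

theorem small_witness_bound {ι : Type*} [Fintype ι]
    (w : ι → Finset (U × R) → ℕ) (k τ : ℕ)
    (hk : k = Fintype.card R) (hk2 : 2 ≤ k) (hτ : 1 ≤ τ)
    (hforms : ∀ i, IsSoDU (w i) ∨ IsBoDU (w i) ∨ IsSoDE (w i) ∨ IsBoDE (w i) ∨
      IsCardUB (w i) ∨ ∃ t ≤ τ, IsCardLB (w i) t)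
    (A : Finset (U × R)) (hA : Complete A) :
    ∃ Astar ⊆ A, Complete Astar ∧
      (univ.filter (fun u => (ausr Astar u).Nonempty)).card ≤ 3 * τ * k.choose 2 ∧
      (∑ i, w i Astar) ≤ ∑ i, w i A := by
  subst hk
  have : Nontrivial R := Fintype.one_lt_card_iff_nontrivial.1 hk2
  obtain ⟨Astar, hsub, hcomplete, hcard, hle⟩ := small_witness_bound_general hτ hA
  exact ⟨Astar, hsub, hcomplete, hcard, sum_le_sum fun i _ => hle (w i) (hforms i)⟩

end APEP
end

section
/- Let U and R be finite sets, let C be a finite set of weighted constraints on U × R that is t-wbounded, and let ω be a weighted user authorization function. If there exists a complete authorization relation at all (i.e., U ≠ ∅ or R = ∅), then there exists a complete authorization relation A* with |A*| ≤ t such that w(A*) ≤ w(A') for every complete authorization relation A' ⊆ U × R. -/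
/-!
Passing to a subset never increases the user authorization weight, so adding it to a `t`-wbounded
weight gives a `t`-wbounded weight. A complete relation of minimum total weight can therefore be
shrunk until it has at most `t` elements, without losing optimality.
-/

open Finset

namespace APEP

variable {U R : Type*} [Fintype U] [Fintype R] [DecidableEq U] [DecidableEq R]

/-- A (total) constraint-weight function `wC` is `t`-wbounded. -/
def WBounded (wC : Finset (U × R) → ℕ) (t : ℕ) : Prop :=
  ∀ A : Finset (U × R), Complete A → t < A.card →
    ∃ A' ⊆ A, Complete A' ∧ A'.card < A.card ∧ wC A' ≤ wC A

/-- `t`-wboundedness of the weight `wC` among the finite sets satisfying `P`, which plays the role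
of completeness, for weights in an arbitrary ordered type. -/
def WBoundedOn {α M : Type*} [LE M] (P : Finset α → Prop) (wC : Finset α → M) (t : ℕ) : Prop :=
  ∀ A : Finset α, P A → t < #A → ∃ A' ⊆ A, P A' ∧ #A' < #A ∧ wC A' ≤ wC A

section WBoundedOn

variable {α M : Type*} {P : Finset α → Prop} {t : ℕ}

theorem WBoundedOn.monotone_add [Preorder M] [Add M] [AddLeftMono M] [AddRightMono M]
    {Ω wC : Finset α → M} (hwC : WBoundedOn P wC t) (hΩ : Monotone Ω) :
    WBoundedOn P (fun A => Ω A + wC A) t := by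
  intro A hA ht
  obtain ⟨A', hsub, hA', hcard, hle⟩ := hwC A hA ht
  exact ⟨A', hsub, hA', hcard, add_le_add (hΩ hsub) hle⟩

theorem WBoundedOn.exists_subset_card_le [Preorder M] {w : Finset α → M}
    (hw : WBoundedOn P w t) {A : Finset α} (hA : P A) :
    ∃ B ⊆ A, P B ∧ #B ≤ t ∧ w B ≤ w A := by
  induction hn : #A using Nat.strong_induction_on generalizing A with
  | _ n ih =>
    subst hn
    obtain hle | hlt := le_or_gt #A t
    · exact ⟨A, Subset.rfl, hA, hle, le_rfl⟩
    · obtain ⟨A', hA'A, hA', hcard, hwA'⟩ := hw A hA hlt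
      obtain ⟨B, hBA', hB, hBt, hwB⟩ := ih #A' hcard hA' rfl
      exact ⟨B, hBA'.trans hA'A, hB, hBt, hwB.trans hwA'⟩

theorem WBoundedOn.exists_card_le_forall_le [LinearOrder M] [WellFoundedLT M]
    {w : Finset α → M} (hw : WBoundedOn P w t) (hP : ∃ A, P A) :
    ∃ B, P B ∧ #B ≤ t ∧ ∀ A, P A → w B ≤ w A := by
  obtain ⟨A₀, hA₀, hmin⟩ := exists_minimalFor_of_wellFoundedLT P w hP
  obtain ⟨B, -, hB, hBt, hwB⟩ := hw.exists_subset_card_le hA₀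
  exact ⟨B, hB, hBt, fun A hA => hwB.trans ((le_total _ _).elim id (hmin hA))⟩

theorem exists_small_optimal_solution_general [LinearOrder M] [WellFoundedLT M]
    [Add M] [AddLeftMono M] [AddRightMono M] {Ω wC : Finset α → M}
    (hΩ : Monotone Ω) (hwC : WBoundedOn P wC t) (hP : ∃ A, P A) :
    ∃ B, P B ∧ #B ≤ t ∧ ∀ A, P A → Ω B + wC B ≤ Ω A + wC A :=
  (hwC.monotone_add hΩ).exists_card_le_forall_le hP

end WBoundedOn

omit [Fintype R] in
theorem wBounded_iff_wBoundedOn_complete {wC : Finset (U × R) → ℕ} {t : ℕ} :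
    WBounded wC t ↔ WBoundedOn Complete wC t :=
  Iff.rfl

theorem complete_univ (h : Nonempty U ∨ IsEmpty R) : Complete (univ : Finset (U × R)) := by
  intro r
  obtain ⟨⟨u⟩⟩ | hR := h
  · exact ⟨u, by simp [ares]⟩
  · exact hR.elim r

omit [Fintype U] in
theorem ausr_mono (u : U) : Monotone fun A : Finset (U × R) => ausr A u :=
  fun _ _ hAB => monotone_filter_right _ fun _ _ hr => hAB hr

theorem monotone_sum_ausr {M : Type*} [AddCommMonoid M] [Preorder M] [AddLeftMono M]
    {ω : U → Finset R → M} (hω : ∀ u, Monotone (ω u)) :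
    Monotone fun A : Finset (U × R) => ∑ u, ω u (ausr A u) :=
  fun _ _ hAB => sum_le_sum fun u _ => hω u (ausr_mono u hAB)

theorem exists_small_optimal_solution {ι : Type*} [Fintype ι]
    (w : ι → Finset (U × R) → ℕ) (t : ℕ)
    (ω : U → Finset R → ℕ)
    (hω : ∀ (u : U) (T' T : Finset R), T' ⊆ T → ω u T' ≤ ω u T)
    (hwb : WBounded (fun A => ∑ i, w i A) t)
    (hex : Nonempty U ∨ IsEmpty R) :
    ∃ Astar : Finset (U × R), Complete Astar ∧ Astar.card ≤ t ∧
      ∀ A' : Finset (U × R), Complete A' →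
        (∑ u, ω u (ausr Astar u)) + (∑ i, w i Astar) ≤
          (∑ u, ω u (ausr A' u)) + (∑ i, w i A') :=
  exists_small_optimal_solution_general (monotone_sum_ausr fun u T' T => hω u T' T)
    (wBounded_iff_wBoundedOn_complete.1 hwb) ⟨univ, complete_univ hex⟩

end APEP
end

section
/- Let U and R be finite sets and let A₁, A₂ ⊆ U × R be authorization relations such that usr_{A₁}(T) = usr_{A₂}(T) for every T ⊆ R. Then there exists a permutation σ of U such that σ(A₁) = A₂. -/
open Finset

namespace APEP

variable {U R : Type*} [Fintype U] [Fintype R] [DecidableEq U] [DecidableEq R]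

/-- The action of a permutation of users on an authorization relation:
`σ(A) = {(σ(u), r) : (u,r) ∈ A}`. -/
def permAuth (σ : Equiv.Perm U) (A : Finset (U × R)) : Finset (U × R) :=
  A.image (fun p => (σ p.1, p.2))

/-- The user profile of `A`: the number of users authorized by `A` for exactly
the set `T` of resources. -/
def usrProfile (A : Finset (U × R)) (T : Finset R) : ℕ :=
  (univ.filter (fun u => ausr A u = T)).card

/-! Equal profiles mean that `u ↦ A₁(u)` and `u ↦ A₂(u)` have equinumerous fibers over every `T`.
Gluing bijections between these fibers gives a permutation `σ` with `A₂(σ u) = A₁(u)` for all `u`,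
which is `σ(A₁) = A₂` read user by user. -/

theorem exists_equiv_forall_apply_eq_of_fiber_equiv {α β γ : Type*} {f : α → γ} {g : β → γ}
    (h : ∀ c, Nonempty ({a // f a = c} ≃ {b // g b = c})) :
    ∃ e : α ≃ β, ∀ a, g (e a) = f a :=
  ⟨Equiv.ofFiberEquiv fun c => (h c).some, Equiv.ofFiberEquiv_map _⟩

theorem image_prodMap_id_eq_iff {α β γ : Type*} (e : α ≃ β) {A : Set (α × γ)} {B : Set (β × γ)} :
    Prod.map e id '' A = B ↔ ∀ a, Prod.mk (e a) ⁻¹' B = Prod.mk a ⁻¹' A := by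
  have image_eq_preimage : Prod.map e id '' A = Prod.map e.symm id ⁻¹' A :=
    (e.prodCongr (.refl γ)).image_eq_preimage_symm A
  rw [image_eq_preimage, e.forall_congr_left, Set.ext_iff, Prod.forall]
  refine forall_congr' fun b => ?_
  simp only [e.apply_symm_apply, Set.ext_iff, Set.mem_preimage, Prod.map_apply, id, iff_comm]

/-- The section `Prod.mk u ⁻¹' A` plays the role of `A(u)`, and the cardinality of the set of users
with section `T` that of `usr_A(T)`. -/
theorem exists_perm_of_usrProfile_eq_general {U R : Type*} {A₁ A₂ : Set (U × R)}
    (h : ∀ T : Set R,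
      Cardinal.mk {u // Prod.mk u ⁻¹' A₁ = T} = Cardinal.mk {u // Prod.mk u ⁻¹' A₂ = T}) :
    ∃ σ : Equiv.Perm U, Prod.map σ id '' A₁ = A₂ := by
  obtain ⟨σ, hσ⟩ := exists_equiv_forall_apply_eq_of_fiber_equiv fun T => Cardinal.eq.mp (h T)
  exact ⟨σ, (image_prodMap_id_eq_iff σ).mpr hσ⟩

theorem coe_permAuth {U R : Type*} [DecidableEq U] [DecidableEq R] (σ : Equiv.Perm U)
    (A : Finset (U × R)) : (permAuth σ A : Set (U × R)) = Prod.map σ id '' A :=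
  coe_image

theorem coe_ausr {U R : Type*} [Fintype R] [DecidableEq U] [DecidableEq R] (A : Finset (U × R))
    (u : U) : (ausr A u : Set R) = Prod.mk u ⁻¹' A :=
  coe_filter_univ _

theorem mk_fiber_eq_usrProfile (A : Finset (U × R)) (T : Finset R) :
    Cardinal.mk {u : U // Prod.mk u ⁻¹' (A : Set (U × R)) = T} = usrProfile A T := by
  simp only [← coe_ausr, coe_inj, Cardinal.mk_fintype, Fintype.card_subtype, usrProfile]

theorem mk_fiber_eq_of_usrProfile_eq {A₁ A₂ : Finset (U × R)}
    (h : ∀ T : Finset R, usrProfile A₁ T = usrProfile A₂ T) (T : Set R) :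
    Cardinal.mk {u : U // Prod.mk u ⁻¹' (A₁ : Set (U × R)) = T} =
      Cardinal.mk {u : U // Prod.mk u ⁻¹' (A₂ : Set (U × R)) = T} := by
  lift T to Finset R using T.toFinite
  rw [mk_fiber_eq_usrProfile, mk_fiber_eq_usrProfile, h]

theorem exists_perm_of_usrProfile_eq (A₁ A₂ : Finset (U × R))
    (h : ∀ T : Finset R, usrProfile A₁ T = usrProfile A₂ T) :
    ∃ σ : Equiv.Perm U, permAuth σ A₁ = A₂ := by
  obtain ⟨σ, hσ⟩ := exists_perm_of_usrProfile_eq_general (mk_fiber_eq_of_usrProfile_eq h)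
  exact ⟨σ, coe_injective ((coe_permAuth σ A₁).trans hσ)⟩

end APEP
end

section
/- For all natural numbers ℓ and k with ℓ ≥ 4, C(ℓ + 2^k − 1, ℓ) ≤ min(2^{ℓk}, ℓ^{2^k − 1}) + 1. -/
/-!
Passing from `C(ℓ + r, r)` to `C(ℓ + r + 1, r + 1)` multiplies by `(ℓ + r + 1) / (r + 1)`, which
for `ℓ ≥ 3` and `r ≥ 1` is so far below `ℓ` that the bound `ℓ ^ r + 1`, an equality at `r = 1`,
is preserved.
-/

theorem choose_add_le_pow_add_one {ℓ : ℕ} (hℓ : 3 ≤ ℓ) (r : ℕ) :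
    (ℓ + r).choose r ≤ ℓ ^ r + 1 := by
  obtain rfl | hr := Nat.eq_zero_or_pos r
  · simp
  induction r, hr using Nat.le_induction with
  | base => simp
  | succ r hr ih =>
    have le_pow : ℓ ≤ ℓ ^ r := Nat.le_self_pow (Nat.ne_of_gt hr) ℓ
    have factor_le : ℓ + r + 2 ≤ ℓ * (r + 1) := by nlinarith
    refine Nat.le_of_mul_le_mul_right (c := r + 1) ?_ r.succ_pos
    calc (ℓ + (r + 1)).choose (r + 1) * (r + 1)
        = (ℓ + r + 1) * (ℓ + r).choose r := (Nat.add_one_mul_choose_eq (ℓ + r) r).symm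
      _ ≤ (ℓ + r + 1) * (ℓ ^ r + 1) := by gcongr
      _ ≤ (ℓ + r + 2) * ℓ ^ r + (r + 1) := by linarith
      _ ≤ ℓ * (r + 1) * ℓ ^ r + (r + 1) := by gcongr
      _ = (ℓ ^ (r + 1) + 1) * (r + 1) := by ring

theorem choose_le_min_pow_bound_general (ℓ r : ℕ) (hℓ : 3 ≤ ℓ) :
    (ℓ + r).choose ℓ ≤ min ((r + 1) ^ ℓ) (ℓ ^ r) + 1 := by
  rw [← min_add_add_right]
  refine le_min ?_ ?_
  · rw [add_comm ℓ r]
    exact (Nat.choose_add_le_add_one_pow r ℓ).trans (Nat.le_succ _)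
  · rw [Nat.choose_symm_add]
    exact choose_add_le_pow_add_one hℓ r

theorem choose_le_min_pow_bound (ℓ k : ℕ) (hℓ : 4 ≤ ℓ) :
    (ℓ + 2 ^ k - 1).choose ℓ ≤ min (2 ^ (ℓ * k)) (ℓ ^ (2 ^ k - 1)) + 1 := by
  simpa only [← Nat.add_sub_assoc Nat.one_le_two_pow, Nat.sub_add_cancel Nat.one_le_two_pow,
    ← pow_mul, mul_comm k] using choose_le_min_pow_bound_general ℓ (2 ^ k - 1) (by lia)
end

section
/- Let U and R be finite sets with |R| = k, let f ∈ ℕ, and let w_c be a weighted constraint on U × R that is f-bounded. Then the singleton set {w_c} is (f·k)-wbounded. -/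
open Finset

namespace APEP

variable {U R : Type*} [Fintype U] [Fintype R] [DecidableEq U] [DecidableEq R]

/-- `A − u`: the relation obtained from `A` by removing all pairs involving user `u`. -/
def delUser (A : Finset (U × R)) (u : U) : Finset (U × R) := A.filter (fun p => p.1 ≠ u)

/-- A weighted constraint `w` is `f`-bounded: for every complete `A` there is a set `U'`
of at most `f` users such that removing any user outside `U'` keeps `A` complete and
does not increase the weight. -/
def FBounded (w : Finset (U × R) → ℕ) (f : ℕ) : Prop :=
  ∀ A : Finset (U × R), Complete A → ∃ U' : Finset U, U'.card ≤ f ∧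
    ∀ u : U, u ∉ U' → Complete (delUser A u) ∧ w (delUser A u) ≤ w A

theorem exists_mem_fst_notMem_of_card_mul_lt {α β : Type*} [Fintype β] {A : Finset (α × β)}
    {s : Finset α} (h : #s * Fintype.card β < #A) : ∃ p ∈ A, p.1 ∉ s := by
  rw [← card_univ, ← card_product] at h
  obtain ⟨p, hpA, hp⟩ := exists_mem_notMem_of_card_lt_card h
  exact ⟨p, hpA, fun hps => hp (mem_product.2 ⟨hps, mem_univ _⟩)⟩

theorem delUser_ssubset {α β : Type*} [DecidableEq α] {A : Finset (α × β)} {u : α} {r : β}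
    (h : (u, r) ∈ A) : delUser A u ⊂ A :=
  filter_ssubset.2 ⟨(u, r), h, not_not_intro rfl⟩

theorem fbounded_imp_wbounded (w : Finset (U × R) → ℕ) (f k : ℕ)
    (hk : k = Fintype.card R) (hf : FBounded w f) :
    WBounded w (f * k) := by
  subst hk
  intro A hA hcard
  obtain ⟨U', hU', hdel⟩ := hf A hA
  have hlt : #U' * Fintype.card R < #A := (Nat.mul_le_mul_right _ hU').trans_lt hcard
  obtain ⟨⟨u, r⟩, hur, hu⟩ := exists_mem_fst_notMem_of_card_mul_lt hlt
  obtain ⟨hcomplete, hweight⟩ := hdel u hu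
  have hss : delUser A u ⊂ A := delUser_ssubset hur
  exact ⟨delUser A u, hss.subset, hcomplete, card_lt_card hss, hweight⟩

end APEP
end

section
/- Let G be a simple graph on vertex set {1, …, n}, let k be a positive integer with k ≤ n, and let ℓ ≥ 1 satisfy 2^{ℓ−1} ≤ k < 2^ℓ. Let R be a set of ℓ resources, let U be a set of k·n users, and let τ = {T₁, …, T_k} be a family of k pairwise distinct nonempty subsets of R. For each i ∈ {1, …, n} let X_i = {i} ∪ {j : vertex j is adjacent to vertex i in G}. Then G has a dominating set of size at most k if and only if there exists a complete authorization relation A ⊆ U × R such that for every i ∈ {1, …, n} there exist T ∈ τ and x ∈ X_i with usr_A(T) = x. -/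
/-!
A set of vertices dominates `G` exactly when it meets every closed neighbourhood, so the question is
one about hitting sets. Authorization relations realize hitting sets because the values of the user
profile on the sets in `τ` can be prescribed freely as long as there are enough users: the leftover
users are authorized for nothing, which does not affect the profile on nonempty sets. Positive
values on `τ` give completeness once `τ` covers `R`. It does so as soon as it has `2 ^ (|R| - 1)`
members, there being only `2 ^ (|R| - 1) - 1` nonempty sets of resources avoiding a given one.
-/

open Finset

namespace APEP

variable {U R : Type*} [Fintype U] [Fintype R] [DecidableEq U] [DecidableEq R]

/-- `X_i`: the set of (1-based) indices of the vertices in the closed neighbourhood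
of vertex `i` of `G`. -/
def closedNbhdIdx {n : ℕ} (G : SimpleGraph (Fin n)) [DecidableRel G.Adj] (i : Fin n) :
    Finset ℕ :=
  (insert i (G.neighborFinset i)).image (fun v : Fin n => (v : ℕ) + 1)

section FiniteFamilies

variable {α β : Type*}

lemma exists_subset_image_of_card_le [DecidableEq β] {s : Finset α} {t : Finset β}
    (h : #t ≤ #s) (b : β) :
    ∃ f : α → β, t ⊆ s.image f ∧ ∀ a, f a ∈ insert b t := by
  have hcard : Fintype.card t ≤ Fintype.card s := by simpa only [Fintype.card_coe] using h
  obtain ⟨e⟩ := Function.Embedding.nonempty_of_card_le hcard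
  have he : Function.Injective fun x : t ↦ (e x : α) := Subtype.val_injective.comp e.injective
  refine ⟨Function.extend (fun x : t ↦ (e x : α)) (↑) fun _ ↦ b, fun x hx ↦ ?_, fun a ↦ ?_⟩
  · exact mem_image.2 ⟨e ⟨x, hx⟩, (e ⟨x, hx⟩).2, he.extend_apply _ _ ⟨x, hx⟩⟩
  · by_cases ha : ∃ x : t, (e x : α) = a
    · obtain ⟨x, rfl⟩ := ha
      simp only [he.extend_apply, mem_insert, x.2, or_true]
    · simp only [Function.extend_apply' _ _ _ ha, mem_insert_self]

lemma exists_card_fiber_eq [Fintype α] [DecidableEq β] {s : Finset β} {b₀ : β} (hb₀ : b₀ ∉ s)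
    (m : β → ℕ) (h : ∑ b ∈ s, m b ≤ Fintype.card α) :
    ∃ f : α → β, ∀ b ∈ s, #{a | f a = b} = m b := by
  have hcard : Fintype.card (Σ b : s, Fin (m b)) ≤ Fintype.card α := by
    simpa only [Fintype.card_sigma, Fintype.card_fin, sum_coe_sort] using h
  obtain ⟨e⟩ := Function.Embedding.nonempty_of_card_le hcard
  let f : α → β := Function.extend e (fun p ↦ (p.1 : β)) fun _ ↦ b₀
  have hf : ∀ p, f (e p) = p.1 := e.injective.extend_apply _ _
  refine ⟨f, fun b hb ↦ ?_⟩
  have fiber_eq : ({a | f a = b} : Finset α) =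
      univ.map ((Function.Embedding.sigmaMk (⟨b, hb⟩ : s)).trans e) := by
    ext a
    simp only [mem_filter_univ, mem_map, mem_univ, true_and]
    constructor
    · intro ha
      by_cases hr : ∃ p, e p = a
      · obtain ⟨⟨c, i⟩, rfl⟩ := hr
        obtain rfl : c = ⟨b, hb⟩ := Subtype.ext ((hf _).symm.trans ha)
        exact ⟨i, rfl⟩
      · have hb₀b : b₀ = b := (Function.extend_apply' _ _ _ hr).symm.trans ha
        exact absurd hb (hb₀b ▸ hb₀)
    · rintro ⟨i, rfl⟩
      exact hf ⟨⟨b, hb⟩, i⟩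
  rw [fiber_eq, card_map, card_univ, Fintype.card_fin]

lemma exists_mem_of_two_pow_le_card [Fintype α] {𝒯 : Finset (Finset α)} (h𝒯 : ∅ ∉ 𝒯)
    (hcard : 2 ^ (Fintype.card α - 1) ≤ #𝒯) (a : α) : ∃ S ∈ 𝒯, a ∈ S := by
  classical
  by_contra! ha
  have subset_powerset : insert ∅ 𝒯 ⊆ (univ.erase a).powerset :=
    insert_subset (empty_mem_powerset _) fun S hS ↦
      mem_powerset.2 (subset_erase.2 ⟨subset_univ S, ha S hS⟩)
  have hle := card_le_card subset_powerset
  rw [card_insert_of_notMem h𝒯, card_powerset, card_erase_of_mem (mem_univ a), card_univ] at hle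
  omega

end FiniteFamilies

lemma exists_dominatingSet_iff_exists_hittingSet {V β : Type*} (G : SimpleGraph V) {c : V → β}
    (hc : Function.Injective c) (k : ℕ) :
    (∃ S : Finset V, #S ≤ k ∧ ∀ v ∉ S, ∃ s ∈ S, G.Adj v s) ↔
      ∃ H : Finset β, #H ≤ k ∧ ∀ v, ∃ x ∈ H, x ∈ c '' insert v (G.neighborSet v) := by
  classical
  constructor
  · rintro ⟨S, hSk, hS⟩
    refine ⟨S.image c, card_image_le.trans hSk, fun v ↦ ?_⟩
    by_cases hv : v ∈ S
    · exact ⟨c v, mem_image_of_mem c hv, v, Set.mem_insert v _, rfl⟩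
    · obtain ⟨s, hs, hadj⟩ := hS v hv
      exact ⟨c s, mem_image_of_mem c hs, s, Set.mem_insert_of_mem v hadj, rfl⟩
  · rintro ⟨H, hHk, hH⟩
    refine ⟨H.preimage c hc.injOn, ?_, fun v hv ↦ ?_⟩
    · rw [card_preimage]
      exact (card_filter_le _ _).trans hHk
    · obtain ⟨_, hx, w, rfl | hadj, rfl⟩ := hH v
      · exact absurd (mem_preimage.2 hx) hv
      · exact ⟨w, mem_preimage.2 hx, hadj⟩

lemma mem_ares_iff_mem_ausr {A : Finset (U × R)} {u : U} {r : R} :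
    u ∈ ares A r ↔ r ∈ ausr A u := by
  simp only [ares, ausr, mem_filter_univ]

/-- The authorization relation given by a function assigning to each user a set of resources;
it serves to build relations from prescribed values of `ausr`. -/
def ofAusr (f : U → Finset R) : Finset (U × R) := univ.filter fun p ↦ p.2 ∈ f p.1

lemma ausr_ofAusr (f : U → Finset R) : ausr (ofAusr f) = f := by
  ext u r
  simp only [ausr, ofAusr, mem_filter_univ]

lemma usrProfile_pos_iff {A : Finset (U × R)} {S : Finset R} :
    0 < usrProfile A S ↔ ∃ u, ausr A u = S := by
  simp only [usrProfile, card_pos, filter_nonempty_iff, mem_univ, true_and]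

lemma complete_iff_forall_exists_usrProfile_pos {A : Finset (U × R)} :
    Complete A ↔ ∀ r, ∃ S, r ∈ S ∧ 0 < usrProfile A S := by
  refine forall_congr' fun r ↦ ?_
  simp only [Finset.Nonempty, mem_ares_iff_mem_ausr, usrProfile_pos_iff]
  constructor
  · rintro ⟨u, hu⟩
    exact ⟨ausr A u, hu, u, rfl⟩
  · rintro ⟨_, hr, u, rfl⟩
    exact ⟨u, hr⟩

lemma exists_usrProfile_eq {𝒯 : Finset (Finset R)} (h𝒯 : ∅ ∉ 𝒯) (m : Finset R → ℕ)
    (hm : ∑ S ∈ 𝒯, m S ≤ Fintype.card U) :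
    ∃ A : Finset (U × R), ∀ S ∈ 𝒯, usrProfile A S = m S := by
  obtain ⟨f, hf⟩ := exists_card_fiber_eq h𝒯 m hm
  exact ⟨ofAusr f, fun S hS ↦ by rw [usrProfile, ausr_ofAusr, hf S hS]⟩

theorem exists_hittingSet_iff_apep {I : Type*} {X : I → Set ℕ} {N : ℕ} {𝒯 : Finset (Finset R)}
    (hN : 0 < N) (hX : ∀ i, X i ⊆ Set.Icc 1 N) (hU : #𝒯 * N ≤ Fintype.card U)
    (h𝒯 : ∅ ∉ 𝒯) (hcover : ∀ r, ∃ S ∈ 𝒯, r ∈ S) :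
    (∃ H : Finset ℕ, #H ≤ #𝒯 ∧ ∀ i, ∃ x ∈ H, x ∈ X i) ↔
      ∃ A : Finset (U × R), Complete A ∧ ∀ i, ∃ S ∈ 𝒯, usrProfile A S ∈ X i := by
  constructor
  · rintro ⟨H, hHk, hH⟩
    -- Elements of `H` outside `Icc 1 N` hit nothing and might need too many users or none at all.
    obtain ⟨m, hHm, hm⟩ := exists_subset_image_of_card_le
      ((card_le_card (inter_subset_left (s₂ := Icc 1 N))).trans hHk) 1
    have hm_mem : ∀ S, m S ∈ Icc 1 N := fun S ↦
      insert_subset (mem_Icc.2 ⟨le_rfl, hN⟩) inter_subset_right (hm S)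
    have hsum : ∑ S ∈ 𝒯, m S ≤ Fintype.card U :=
      (sum_le_card_nsmul _ _ N fun S _ ↦ (mem_Icc.1 (hm_mem S)).2).trans hU
    obtain ⟨A, hA⟩ := exists_usrProfile_eq h𝒯 m hsum
    refine ⟨A, complete_iff_forall_exists_usrProfile_pos.2 fun r ↦ ?_, fun i ↦ ?_⟩
    · obtain ⟨S, hS, hr⟩ := hcover r
      exact ⟨S, hr, (hA S hS).symm ▸ (mem_Icc.1 (hm_mem S)).1⟩
    · obtain ⟨x, hxH, hxX⟩ := hH i
      obtain ⟨S, hS, rfl⟩ := mem_image.1 (hHm (mem_inter.2 ⟨hxH, mem_Icc.2 (hX i hxX)⟩))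
      exact ⟨S, hS, (hA S hS).symm ▸ hxX⟩
  · rintro ⟨A, -, hA⟩
    refine ⟨𝒯.image (usrProfile A), card_image_le, fun i ↦ ?_⟩
    obtain ⟨S, hS, hSi⟩ := hA i
    exact ⟨usrProfile A S, mem_image_of_mem _ hS, hSi⟩

theorem dominatingSet_iff_apep_general {V : Type*} (G : SimpleGraph V) {c : V → ℕ} {N : ℕ}
    {𝒯 : Finset (Finset R)} (hc : Function.Injective c) (hN : 0 < N)
    (hcN : ∀ v, c v ∈ Set.Icc 1 N) (hU : #𝒯 * N ≤ Fintype.card U)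
    (h𝒯 : ∅ ∉ 𝒯) (hcover : ∀ r, ∃ S ∈ 𝒯, r ∈ S) :
    (∃ S : Finset V, #S ≤ #𝒯 ∧ ∀ v ∉ S, ∃ s ∈ S, G.Adj v s) ↔
      ∃ A : Finset (U × R), Complete A ∧
        ∀ v, ∃ S ∈ 𝒯, usrProfile A S ∈ c '' insert v (G.neighborSet v) :=
  (exists_dominatingSet_iff_exists_hittingSet G hc #𝒯).trans <|
    exists_hittingSet_iff_apep hN (fun _ ↦ Set.image_subset_iff.2 fun w _ ↦ hcN w) hU h𝒯 hcover

lemma coe_closedNbhdIdx {n : ℕ} (G : SimpleGraph (Fin n)) [DecidableRel G.Adj] (i : Fin n) :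
    (closedNbhdIdx G i : Set ℕ) =
      (fun v : Fin n ↦ (v : ℕ) + 1) '' insert i (G.neighborSet i) := by
  simp only [closedNbhdIdx, coe_image, coe_insert, SimpleGraph.coe_neighborFinset]

theorem dominatingSet_iff_apep (n k ℓ : ℕ) (G : SimpleGraph (Fin n))
    [DecidableRel G.Adj]
    (hk1 : 1 ≤ k) (hkn : k ≤ n) (hℓ : 1 ≤ ℓ)
    (hlow : 2 ^ (ℓ - 1) ≤ k) (hhigh : k < 2 ^ ℓ)
    (hR : Fintype.card R = ℓ) (hU : Fintype.card U = k * n)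
    (T : Fin k → Finset R) (hTne : ∀ j, (T j).Nonempty)
    (hTinj : Function.Injective T) :
    (∃ S : Finset (Fin n), S.card ≤ k ∧ ∀ v ∉ S, ∃ s ∈ S, G.Adj v s) ↔
      (∃ A : Finset (U × R), Complete A ∧
        ∀ i : Fin n, ∃ (j : Fin k) (x : ℕ),
          x ∈ closedNbhdIdx G i ∧ usrProfile A (T j) = x) := by
  have hempty : ∅ ∉ univ.map ⟨T, hTinj⟩ := by simpa using fun j ↦ (hTne j).ne_empty
  simpa [← coe_closedNbhdIdx] using
    dominatingSet_iff_apep_general (U := U) G ((add_left_injective 1).comp Fin.val_injective)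
      (hk1.trans hkn) (fun v ↦ ⟨Nat.le_add_left 1 v, v.2⟩) (by simp [hU]) hempty
      (exists_mem_of_two_pow_le_card hempty (by simpa [hR]))

end APEP
end

section
/- Let U be a nonempty finite set and R a finite set, let ω be a weighted user authorization function, and let C be a finite set of weighted constraints on U × R, each of which is either of the form w_c(A) = f_c(|A(r_c) ∩ A(r'_c)|) (SoD_U) or of the form w_c(A) = f_c(max(|A(r_c) \ A(r'_c)|, |A(r'_c) \ A(r_c)|)) (BoD_U), where r_c, r'_c ∈ R and f_c : ℤ → ℕ is monotonically increasing with f_c(z) = 0 iff z ≤ 0. For a function π : R → U define its plan weight W(π) = Σ_{u ∈ U} ω(u, {r ∈ R : π(r) = u}) + Σ over SoD_U constraints c of (f_c(1) if π(r_c) = π(r'_c), else 0) + Σ over BoD_U constraints c of (f_c(1) if π(r_c) ≠ π(r'_c), else 0). Then the minimum of w(A) over all complete authorization relations A ⊆ U × R equals the minimum of W(π) over all functions π : R → U. -/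
open Finset

namespace APEP

variable {U R : Type*} [Fintype U] [Fintype R] [DecidableEq U] [DecidableEq R]

/-!
Regarded as a relation with exactly one user per resource, a plan `π` has weight `W(π)`.
Conversely, a complete relation `A` dominates the plan that picks a user from each set `A(r)` by a
choice depending on the set `A(r)` alone: if `π(r_c) = π(r'_c)` then this user lies in `A(r_c) ∩
A(r'_c)`, and if `π(r_c) ≠ π(r'_c)` then `A(r_c) ≠ A(r'_c)`, so in either case a constraint
violated by `π` already costs at least `f_c(1)` in `A`.
-/

/-- A soft constraint `c` on the pair of resources `(r_c, r'_c) = (c.fst, c.snd)`; the same data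
serve for `SoD_U` and `BoD_U` constraints. The penalty `f_c` is recorded on `ℕ` only, since it is
only ever evaluated at cardinalities. -/
structure PairConstraint (R M : Type*) [Preorder M] [Zero M] where
  fst : R
  snd : R
  penalty : ℕ → M
  penalty_mono : Monotone penalty
  penalty_zero : penalty 0 = 0

theorem PairConstraint.penalty_nonneg {R M : Type*} [Preorder M] [Zero M] (c : PairConstraint R M)
    (n : ℕ) : 0 ≤ c.penalty n :=
  c.penalty_zero.ge.trans (c.penalty_mono n.zero_le)

/-- The authorization relation of a plan: each resource is assigned exactly one user. -/
def planRelation (π : R → U) : Finset (U × R) := univ.filter (fun p => π p.2 = p.1)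

section PlanRelation

variable (π : R → U)

@[simp]
theorem ares_planRelation (r : R) : ares (planRelation π) r = {π r} := by
  ext u
  simp [ares, planRelation, eq_comm]

@[simp]
theorem ausr_planRelation (u : U) :
    ausr (planRelation π) u = univ.filter (fun r => π r = u) := by
  ext r
  simp [ausr, planRelation]

theorem complete_planRelation : Complete (planRelation π) := fun r => by simp

end PlanRelation

omit [Fintype R] in
theorem Complete.exists_plan {A : Finset (U × R)} (hA : Complete A) :
    ∃ π : R → U, (∀ r, π r ∈ ares A r) ∧ ∀ r s, ares A r = ares A s → π r = π s :=
  ⟨fun r => (hA r).choose, fun r => (hA r).choose_spec, fun r s h => by simp only [h]⟩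

theorem filter_plan_eq_subset_ausr {A : Finset (U × R)} {π : R → U} (hπ : ∀ r, π r ∈ ares A r)
    (u : U) : univ.filter (fun r => π r = u) ⊆ ausr A u := by
  intro r hr
  obtain rfl : π r = u := by simpa only [mem_filter_univ] using hr
  simpa only [ares, ausr, mem_filter_univ] using hπ r

namespace PairConstraint

variable {M : Type*} [Preorder M] [Zero M] (c : PairConstraint R M)

/-- The weight of an authorization relation under `c` read as a `SoD_U` constraint. -/
def sodWeight (A : Finset (U × R)) : M := c.penalty #(ares A c.fst ∩ ares A c.snd)

/-- The weight of an authorization relation under `c` read as a `BoD_U` constraint. -/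
def bodWeight (A : Finset (U × R)) : M :=
  c.penalty (max #(ares A c.fst \ ares A c.snd) #(ares A c.snd \ ares A c.fst))

/-- The weight of a plan under `c` read as a separation-of-duty constraint. -/
def planSodWeight (π : R → U) : M := if π c.fst = π c.snd then c.penalty 1 else 0

/-- The weight of a plan under `c` read as a binding-of-duty constraint. -/
def planBodWeight (π : R → U) : M := if π c.fst ≠ π c.snd then c.penalty 1 else 0

@[simp]
theorem sodWeight_planRelation (π : R → U) :
    c.sodWeight (planRelation π) = c.planSodWeight π := by
  by_cases h : π c.fst = π c.snd <;> simp [sodWeight, planSodWeight, h, c.penalty_zero]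

@[simp]
theorem bodWeight_planRelation (π : R → U) :
    c.bodWeight (planRelation π) = c.planBodWeight π := by
  by_cases h : π c.fst = π c.snd
  · simp [bodWeight, planBodWeight, h, c.penalty_zero]
  · simp [bodWeight, planBodWeight, h, sdiff_singleton_eq_erase, Ne.symm h]

omit [Fintype R] in
theorem planSodWeight_le_sodWeight {A : Finset (U × R)} {π : R → U}
    (hfst : π c.fst ∈ ares A c.fst) (hsnd : π c.snd ∈ ares A c.snd) :
    c.planSodWeight π ≤ c.sodWeight A := by
  rw [planSodWeight]
  split_ifs with h
  · have shared : π c.fst ∈ ares A c.fst ∩ ares A c.snd := mem_inter.2 ⟨hfst, h ▸ hsnd⟩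
    exact c.penalty_mono (card_pos.2 ⟨_, shared⟩)
  · exact c.penalty_nonneg _

omit [Fintype R] in
theorem planBodWeight_le_bodWeight {A : Finset (U × R)} {π : R → U}
    (hπ : ares A c.fst = ares A c.snd → π c.fst = π c.snd) :
    c.planBodWeight π ≤ c.bodWeight A := by
  rw [planBodWeight]
  split_ifs with h
  · refine c.penalty_mono (Nat.one_le_iff_ne_zero.2 fun hmax => h (hπ ?_))
    rw [Nat.max_eq_zero_iff, card_eq_zero, card_eq_zero, sdiff_eq_empty_iff_subset,
      sdiff_eq_empty_iff_subset] at hmax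
    exact hmax.1.antisymm hmax.2
  · exact c.penalty_nonneg _

end PairConstraint

section Weight

variable {M ιs ιb : Type*} [AddCommMonoid M] [Fintype ιs] [Fintype ιb]

/-- The weight `w(A)` of an authorization relation, for `SoD_U` constraints `cs` and `BoD_U`
constraints `cb`. -/
def relationWeight [Preorder M] (ω : U → Finset R → M) (cs : ιs → PairConstraint R M)
    (cb : ιb → PairConstraint R M) (A : Finset (U × R)) : M :=
  ∑ u, ω u (ausr A u) + (∑ i, (cs i).sodWeight A + ∑ i, (cb i).bodWeight A)

/-- The weight `W(π)` of a plan, for `SoD_U` constraints `cs` and `BoD_U` constraints `cb`. -/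
def planWeight [Preorder M] (ω : U → Finset R → M) (cs : ιs → PairConstraint R M)
    (cb : ιb → PairConstraint R M) (π : R → U) : M :=
  ∑ u, ω u (univ.filter (fun r => π r = u)) +
    (∑ i, (cs i).planSodWeight π + ∑ i, (cb i).planBodWeight π)

theorem relationWeight_planRelation [Preorder M] (ω : U → Finset R → M)
    (cs : ιs → PairConstraint R M) (cb : ιb → PairConstraint R M) (π : R → U) :
    relationWeight ω cs cb (planRelation π) = planWeight ω cs cb π := by
  simp only [relationWeight, planWeight, ausr_planRelation,
    PairConstraint.sodWeight_planRelation, PairConstraint.bodWeight_planRelation]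

theorem Complete.exists_planWeight_le [Preorder M] [IsOrderedAddMonoid M]
    {ω : U → Finset R → M} (hω : ∀ u, Monotone (ω u)) (cs : ιs → PairConstraint R M)
    (cb : ιb → PairConstraint R M) {A : Finset (U × R)} (hA : Complete A) :
    ∃ π : R → U, planWeight ω cs cb π ≤ relationWeight ω cs cb A := by
  obtain ⟨π, hmem, hagree⟩ := hA.exists_plan
  refine ⟨π, add_le_add (sum_le_sum fun u _ => ?_)
    (add_le_add (sum_le_sum fun i _ => ?_) (sum_le_sum fun i _ => ?_))⟩
  · exact hω u (filter_plan_eq_subset_ausr hmem u)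
  · exact (cs i).planSodWeight_le_sodWeight (hmem _) (hmem _)
  · exact (cb i).planBodWeight_le_bodWeight (hagree _ _)

theorem bodU_sodU_valuedWSP_reduction_general [Nonempty U] [LinearOrder M]
    [IsOrderedAddMonoid M] {ω : U → Finset R → M} (hω : ∀ u, Monotone (ω u))
    (cs : ιs → PairConstraint R M) (cb : ιb → PairConstraint R M) :
    ∃ m, IsLeast (relationWeight ω cs cb '' {A | Complete A}) m ∧
      IsLeast (Set.range (planWeight (U := U) ω cs cb)) m := by
  obtain ⟨π, hmin⟩ := Finite.exists_min (planWeight ω cs cb)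
  refine ⟨planWeight ω cs cb π, ⟨?_, ?_⟩, Set.mem_range_self π, Set.forall_mem_range.2 hmin⟩
  · exact ⟨planRelation π, complete_planRelation π, relationWeight_planRelation ω cs cb π⟩
  · rintro _ ⟨A, hA, rfl⟩
    obtain ⟨π', hle⟩ := Complete.exists_planWeight_le hω cs cb hA
    exact (hmin π').trans hle

end Weight

/-- The restriction to `ℕ` of a constraint given by an integer penalty function. -/
def MonoIncZero.pairConstraint {f : ℤ → ℕ} (hf : MonoIncZero f) (r r' : R) :
    PairConstraint R ℕ where
  fst := r
  snd := r'
  penalty n := f n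
  penalty_mono := hf.1.comp Nat.mono_cast
  penalty_zero := (hf.2 0).2 le_rfl

theorem bodU_sodU_valuedWSP_reduction
    [Nonempty U] {ιs ιb : Type*} [Fintype ιs] [Fintype ιb]
    (ω : U → Finset R → ℕ)
    (hω : ∀ (u : U) (T' T : Finset R), T' ⊆ T → ω u T' ≤ ω u T)
    -- SoD_U constraints, indexed by ιs
    (rs rs' : ιs → R) (fs : ιs → ℤ → ℕ) (hfs : ∀ i, MonoIncZero (fs i))
    -- BoD_U constraints, indexed by ιb
    (rb rb' : ιb → R) (fb : ιb → ℤ → ℕ) (hfb : ∀ i, MonoIncZero (fb i))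
    -- the total weight of an authorization relation
    (wt : Finset (U × R) → ℕ)
    (hwt : ∀ A, wt A = (∑ u, ω u (ausr A u)) +
      ((∑ i, fs i (((ares A (rs i)) ∩ (ares A (rs' i))).card)) +
        ∑ i, fb i (max ((ares A (rb i) \ ares A (rb' i)).card)
          ((ares A (rb' i) \ ares A (rb i)).card))))
    -- the weight of a plan `π : R → U`
    (W : (R → U) → ℕ)
    (hW : ∀ π : R → U, W π = (∑ u, ω u (univ.filter (fun r => π r = u))) +
      ((∑ i, if π (rs i) = π (rs' i) then fs i 1 else 0) +
        ∑ i, if π (rb i) ≠ π (rb' i) then fb i 1 else 0)) :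
    sInf {n : ℕ | ∃ A : Finset (U × R), Complete A ∧ wt A = n} =
      sInf {n : ℕ | ∃ π : R → U, W π = n} := by
  obtain ⟨m, hrel, hplan⟩ := bodU_sodU_valuedWSP_reduction_general (fun u T' T h => hω u T' T h)
    (fun i => (hfs i).pairConstraint (rs i) (rs' i))
    (fun i => (hfb i).pairConstraint (rb i) (rb' i))
  simp only [← Nat.cast_max] at hwt
  obtain rfl := funext hwt
  obtain rfl := funext hW
  exact hrel.csInf_eq.trans hplan.csInf_eq.symm

end APEP
end

section
/- Let U and R be finite sets with |R| = k, and let C consist of: a finite set C_SoD of weighted constraints, each of the form w_c(A) = p_SoD · |A(r_c) ∩ A(r'_c)| for some r_c, r'_c ∈ R; a finite set C_Card of weighted constraints, each of the form w_c(A) = p_Card · max(0, ℓ_c − |A(r_c)|) for some r_c ∈ R and ℓ_c ∈ ℕ; and one user-count constraint w_Π(A) = |A(R)|², where A(R) = {u ∈ U : A(u) ≠ ∅} and p_SoD, p_Card ∈ ℕ. Then: (i) if A ⊆ U × R satisfies 2·|A(R)| > |C_Card|·p_Card + 1, then for every user u with A(u) ≠ ∅, w_C(A − u) < w_C(A), where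 A − u = A \ ({u} × R); consequently (ii) every authorization relation A minimizing w_C over all subsets of U × R satisfies 2·|A(R)| ≤ |C_Card|·p_Card + 1, and hence 2·|A| ≤ k·(|C_Card|·p_Card + 1). -/
open Finset

namespace APEP

variable {U R : Type*} [Fintype U] [Fintype R] [DecidableEq U] [DecidableEq R]

/-- `A(R)`: the set of users authorized by `A` for at least one resource. -/
def involved (A : Finset (U × R)) : Finset U :=
  univ.filter (fun u => (ausr A u).Nonempty)

/-!
Removing a user `u` who holds some authorization lowers the user count `n = |A(R)|` by one, and so
lowers `n²` by `2n - 1`. Separation-of-duty penalties do not increase, and each cardinality penalty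
grows by at most `p_Card`, since `A(r)` loses at most the one element `u`. Hence `A` cannot be
optimal once `2n - 1` exceeds the total growth `|C_Card| · p_Card`.
-/

theorem mem_involved {A : Finset (U × R)} {u : U} : u ∈ involved A ↔ (ausr A u).Nonempty :=
  mem_filter_univ u

omit [Fintype R] in
theorem ares_delUser (A : Finset (U × R)) (u : U) (r : R) :
    ares (delUser A u) r = (ares A r).erase u := by
  ext v
  simp only [ares, delUser, mem_filter, mem_univ, true_and, mem_erase, and_comm]

theorem involved_delUser (A : Finset (U × R)) (u : U) :
    involved (delUser A u) = (involved A).erase u := by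
  ext v
  simp only [involved, ausr, delUser, Finset.Nonempty, mem_filter, mem_univ, true_and, mem_erase,
    and_comm, exists_and_left]

theorem card_le_card_involved_mul (A : Finset (U × R)) :
    #A ≤ #(involved A) * Fintype.card R := by
  have subset_product : A ⊆ involved A ×ˢ univ := fun p hp =>
    mem_product.2 ⟨mem_involved.2 ⟨p.2, (mem_filter_univ p.2).2 hp⟩, mem_univ p.2⟩
  simpa only [card_product, card_univ] using card_le_card subset_product

/-- The weight `w_c(A) = p · |A(r) ∩ A(r')|` of a separation-of-duty constraint. -/
def sodWeight (p : ℕ) (r r' : R) (A : Finset (U × R)) : ℕ := p * #(ares A r ∩ ares A r')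

/-- The weight `w_c(A) = p · max(0, ℓ - |A(r)|)` of a cardinality lower bound; the maximum with `0`
is truncated subtraction. -/
def cardWeight (p : ℕ) (r : R) (ℓ : ℕ) (A : Finset (U × R)) : ℕ := p * (ℓ - #(ares A r))

omit [Fintype R] in
theorem sodWeight_delUser_le (p : ℕ) (r r' : R) (A : Finset (U × R)) (u : U) :
    sodWeight p r r' (delUser A u) ≤ sodWeight p r r' A := by
  unfold sodWeight
  rw [ares_delUser, ares_delUser]
  gcongr <;> exact erase_subset u _

omit [Fintype R] in
theorem cardWeight_delUser_le (p : ℕ) (r : R) (ℓ : ℕ) (A : Finset (U × R)) (u : U) :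
    cardWeight p r ℓ (delUser A u) ≤ cardWeight p r ℓ A + p := by
  have card_pred_le : #(ares A r) - 1 ≤ #(ares (delUser A u) r) := by
    rw [ares_delUser]
    exact pred_card_le_card_erase
  calc p * (ℓ - #(ares (delUser A u) r))
      ≤ p * (ℓ - #(ares A r) + 1) := Nat.mul_le_mul_left p (by omega)
    _ = p * (ℓ - #(ares A r)) + p := Nat.mul_succ _ _

omit [Fintype R] in
theorem sum_sodWeight_add_sum_cardWeight_delUser_le {ιs ιc : Type*} [Fintype ιs] [Fintype ιc]
    (pSoD : ιs → ℕ) (pCard : ιc → ℕ) (rs rs' : ιs → R) (rc : ιc → R) (ℓc : ιc → ℕ)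
    (A : Finset (U × R)) (u : U) :
    ∑ i, sodWeight (pSoD i) (rs i) (rs' i) (delUser A u) +
        ∑ j, cardWeight (pCard j) (rc j) (ℓc j) (delUser A u) ≤
      ∑ i, sodWeight (pSoD i) (rs i) (rs' i) A + ∑ j, cardWeight (pCard j) (rc j) (ℓc j) A +
        ∑ j, pCard j := by
  rw [add_assoc, ← sum_add_distrib]
  gcongr
  · exact sodWeight_delUser_le _ _ _ A u
  · exact cardWeight_delUser_le _ _ _ A u

theorem add_card_involved_sq_delUser_lt {w : Finset (U × R) → ℕ} {D : ℕ} {A : Finset (U × R)}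
    {u : U} (hw : w (delUser A u) ≤ w A + D) (hA : D + 1 < 2 * #(involved A))
    (hu : u ∈ involved A) :
    w (delUser A u) + #(involved (delUser A u)) ^ 2 < w A + #(involved A) ^ 2 := by
  have card_delUser : #(involved (delUser A u)) + 1 = #(involved A) := by
    rw [involved_delUser]
    exact card_erase_add_one hu
  rw [← card_delUser] at hA ⊢
  set n := #(involved (delUser A u))
  calc w (delUser A u) + n ^ 2 ≤ w A + D + n ^ 2 := by gcongr
    _ < w A + (2 * n + 1) + n ^ 2 := by omega
    _ = w A + (n + 1) ^ 2 := by ring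

theorem userCount_constraint_bound_general {w wC : Finset (U × R) → ℕ} {D : ℕ}
    (hw : ∀ A u, w (delUser A u) ≤ w A + D) (hwC : ∀ A, wC A = w A + #(involved A) ^ 2) :
    (∀ A : Finset (U × R), D + 1 < 2 * #(involved A) →
      ∀ u : U, (ausr A u).Nonempty → wC (delUser A u) < wC A) ∧
    (∀ A : Finset (U × R), (∀ u : U, wC A ≤ wC (delUser A u)) →
      2 * #(involved A) ≤ D + 1 ∧ 2 * #A ≤ Fintype.card R * (D + 1)) := by
  have delUser_lt (A : Finset (U × R)) (hA : D + 1 < 2 * #(involved A)) (u : U)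
      (hu : (ausr A u).Nonempty) : wC (delUser A u) < wC A := by
    rw [hwC, hwC]
    exact add_card_involved_sq_delUser_lt (hw A u) hA (mem_involved.2 hu)
  refine ⟨delUser_lt, fun A hmin => ?_⟩
  have involved_le : 2 * #(involved A) ≤ D + 1 := by
    by_contra! hA
    obtain ⟨u, hu⟩ : (involved A).Nonempty := card_pos.1 (by omega)
    exact (delUser_lt A hA u (mem_involved.1 hu)).not_ge (hmin u)
  refine ⟨involved_le, ?_⟩
  calc 2 * #A ≤ 2 * (#(involved A) * Fintype.card R) := by
        gcongr
        exact card_le_card_involved_mul A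
    _ = Fintype.card R * (2 * #(involved A)) := by ring
    _ ≤ Fintype.card R * (D + 1) := by gcongr

theorem userCount_constraint_bound
    {ιs ιc : Type*} [Fintype ιs] [Fintype ιc]
    (pSoD pCard : ℕ)
    -- SoD constraints, indexed by ιs, with scopes (rs i, rs' i)
    (rs rs' : ιs → R)
    -- Cardinality-Lower-Bound constraints, indexed by ιc, with scope rc j and bound ℓc j
    (rc : ιc → R) (ℓc : ιc → ℕ)
    (k : ℕ) (hk : k = Fintype.card R)
    -- the total constraint weight, including the user-count constraint
    (wC : Finset (U × R) → ℕ)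
    (hwC : ∀ A, wC A = (∑ i, pSoD * ((ares A (rs i)) ∩ (ares A (rs' i))).card) +
      ((∑ j, pCard * (ℓc j - (ares A (rc j)).card)) + (involved A).card ^ 2)) :
    (∀ A : Finset (U × R), Fintype.card ιc * pCard + 1 < 2 * (involved A).card →
      ∀ u : U, (ausr A u).Nonempty → wC (delUser A u) < wC A) ∧
    (∀ A : Finset (U × R), (∀ A' : Finset (U × R), wC A ≤ wC A') →
      2 * (involved A).card ≤ Fintype.card ιc * pCard + 1 ∧
        2 * A.card ≤ k * (Fintype.card ιc * pCard + 1)) := by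
  have h := userCount_constraint_bound_general
    (sum_sodWeight_add_sum_cardWeight_delUser_le (fun _ => pSoD) (fun _ => pCard) rs rs' rc ℓc)
    (fun A => (hwC A).trans (add_assoc _ _ _).symm)
  rw [sum_const, card_univ, smul_eq_mul, ← hk] at h
  exact ⟨h.1, fun A hmin => h.2 A fun u => hmin (delUser A u)⟩

end APEP
end
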